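/- The logarithmic ℓ2-norm of the full semidiscretisation matrix satisfies μ₂[A] ≤ C̃, where C̃ = (|w₋₁| − 10w₂)(α + β) − (r + λ). -/

import Mathlib

open Matrix

/-- Central second-difference matrix on a uniform mesh with mesh width Δ and
homogeneous Dirichlet boundary conditions (out-of-range values taken zero). -/
noncomputable def D2mat (m : ℕ) (Δ : ℝ) : Matrix (Fin (m+1)) (Fin (m+1)) ℝ :=
  Matrix.of fun i k =>
    ((if (k.val : ℤ) = (i.val : ℤ) - 1 then 1 else 0)
      + (if k = i then -2 else 0)
      + (if (k.val : ℤ) = (i.val : ℤ) + 1 then 1 else 0)) / Δ^2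

/-- Upwind first-derivative matrix Ã for the general second-order scheme with
weights (w₋₁,w₀,w₁,w₂), mesh width Δ, upwind direction given by the sign of the
convection coefficient c, and homogeneous Dirichlet boundary conditions
(out-of-range values taken zero). -/
noncomputable def Atilde (m : ℕ) (Δ : ℝ) (c : ℕ → ℝ) (wm1 w0 w1 w2 : ℝ) :
    Matrix (Fin (m+1)) (Fin (m+1)) ℝ :=
  Matrix.of fun i k =>
    if 0 < c i.val then
      ((if (k.val : ℤ) = (i.val : ℤ) + 2 then w2 else 0)
        + (if (k.val : ℤ) = (i.val : ℤ) + 1 then w1 else 0)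
        + (if k = i then w0 else 0)
        + (if (k.val : ℤ) = (i.val : ℤ) - 1 then wm1 else 0)) / Δ
    else if c i.val < 0 then
      ((if (k.val : ℤ) = (i.val : ℤ) + 1 then -wm1 else 0)
        + (if k = i then -w0 else 0)
        + (if (k.val : ℤ) = (i.val : ℤ) - 1 then -w1 else 0)
        + (if (k.val : ℤ) = (i.val : ℤ) - 2 then -w2 else 0)) / Δ
    else 0

/-!
Extend grid vectors by zero to `f : ℤ → ℝ`. The moment conditions of order 0 and 2 give `w₀ = 3w₂`
and `w₁ = -w₋₁ - 4w₂`, so the upwind scheme is `-w₋₁` times the central difference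
`f(z+1) - f(z-1)` plus `±w₂` times the BDF2 difference `3f(z) - 4f(z±1) + f(z±2)`, where `±` is the
sign of the coefficient `c(z)`.

Against `c(z) f(z)`, the central difference is skew up to a commutator, which costs
`sup |c(z+1) - c(z)|` times `‖f‖²`, whatever the sign of `c`. The BDF2 difference satisfies
Dahlquist's energy identity `2(3a - 4b + d)a = E(a,b) - E(b,d) + (a - 2b + d)²`, where
`E(a,b) = a² + (2a - b)²`; summation by parts moves the difference onto the coefficient, and
`∑ E ≤ 10 ‖f‖²`. The positive and negative parts of `c` each contribute half of the latter, whence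
`-10 w₂`. Diffusion is dissipative.
-/

open scoped Kronecker

/-- `LogNormLE M C` says that the logarithmic `ℓ²`-norm of `M` is at most `C`. It is expressed
through the quadratic form, so that no maximum over nonzero vectors has to exist. -/
def LogNormLE {ι : Type*} [Fintype ι] (M : Matrix ι ι ℝ) (C : ℝ) : Prop :=
  ∀ v : ι → ℝ, M *ᵥ v ⬝ᵥ v ≤ C * (v ⬝ᵥ v)

namespace LogNormLE

variable {ι κ : Type*} [Fintype ι] [Fintype κ] {M N : Matrix ι ι ℝ} {C D : ℝ}

lemma add (hM : LogNormLE M C) (hN : LogNormLE N D) : LogNormLE (M + N) (C + D) := fun v => by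
  rw [add_mulVec, add_dotProduct, add_mul]
  exact add_le_add (hM v) (hN v)

lemma smul {s : ℝ} (hs : 0 ≤ s) (hM : LogNormLE M C) : LogNormLE (s • M) (s * C) := fun v => by
  rw [smul_mulVec, smul_dotProduct, smul_eq_mul, mul_assoc]
  exact mul_le_mul_of_nonneg_left (hM v) hs

lemma sub_smul_one [DecidableEq ι] (s : ℝ) (hM : LogNormLE M C) :
    LogNormLE (M - s • (1 : Matrix ι ι ℝ)) (C - s) := fun v => by
  rw [sub_mulVec, smul_mulVec, one_mulVec, sub_dotProduct, smul_dotProduct, smul_eq_mul, sub_mul]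
  exact sub_le_sub_right (hM v) _

lemma kronecker_one [DecidableEq κ] (hM : LogNormLE M C) :
    LogNormLE (M ⊗ₖ (1 : Matrix κ κ ℝ)) C := fun V => by
  have columns : M ⊗ₖ (1 : Matrix κ κ ℝ) *ᵥ V ⬝ᵥ V =
      ∑ j, (M *ᵥ fun i => V (i, j)) ⬝ᵥ fun i => V (i, j) := by
    simp [dotProduct, mulVec, Fintype.sum_prod_type_right, one_apply]
  rw [columns, dotProduct, Fintype.sum_prod_type_right, Finset.mul_sum]
  exact Finset.sum_le_sum fun j _ => hM fun i => V (i, j)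

lemma one_kronecker [DecidableEq κ] (hM : LogNormLE M C) :
    LogNormLE ((1 : Matrix κ κ ℝ) ⊗ₖ M) C := fun V => by
  have rows : (1 : Matrix κ κ ℝ) ⊗ₖ M *ᵥ V ⬝ᵥ V =
      ∑ i, (M *ᵥ fun j => V (i, j)) ⬝ᵥ fun j => V (i, j) := by
    simp [dotProduct, mulVec, Fintype.sum_prod_type, one_apply]
  rw [rows, dotProduct, Fintype.sum_prod_type, Finset.mul_sum]
  exact Finset.sum_le_sum fun i _ => hM fun j => V (i, j)

end LogNormLE

section FiniteSupport

open Function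

lemma finsum_le_finsum_of_le_add_sub {F G T : ℤ → ℝ} (hF : F.HasFiniteSupport)
    (hG : G.HasFiniteSupport) (hT : T.HasFiniteSupport)
    (h : ∀ z, F z ≤ G z + (T (z + 1) - T z)) : ∑ᶠ z, F z ≤ ∑ᶠ z, G z := by
  have hT' : (fun z => T (z + 1)).HasFiniteSupport :=
    hT.fun_comp_of_injective (add_left_injective 1)
  have shift : ∑ᶠ z, T (z + 1) = ∑ᶠ z, T z := finsum_comp_equiv (Equiv.addRight (1 : ℤ))
  calc ∑ᶠ z, F z ≤ ∑ᶠ z, (G z + (T (z + 1) - T z)) :=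
        finsum_le_finsum' hF (hG.fun_add (hT'.fun_sub hT)) h
    _ = ∑ᶠ z, G z + (∑ᶠ z, T (z + 1) - ∑ᶠ z, T z) := by
        rw [finsum_add_distrib hG (hT'.fun_sub hT), finsum_sub_distrib hT' hT]
    _ = ∑ᶠ z, G z := by rw [shift, sub_self, add_zero]

variable {f : ℤ → ℝ} (hf : f.HasFiniteSupport) {c : ℤ → ℝ} {L : ℝ}

include hf

@[fun_prop]
lemma hasFiniteSupport_sq : (fun z => f z ^ 2).HasFiniteSupport := by
  simpa only [sq] using hf.fun_mul_left f

lemma finsum_secondDifference_mul_self_nonpos :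
    ∑ᶠ z, (f (z - 1) - 2 * f z + f (z + 1)) * f z ≤ 0 := by
  calc ∑ᶠ z, (f (z - 1) - 2 * f z + f (z + 1)) * f z ≤ ∑ᶠ _ : ℤ, (0 : ℝ) := by
        refine finsum_le_finsum_of_le_add_sub (T := fun z => 1 / 2 * (f z ^ 2 - f (z - 1) ^ 2))
          (by fun_prop) (by fun_prop) (by fun_prop (disch := simp [Injective])) fun z => ?_
        rw [add_sub_cancel_right]
        nlinarith [sq_nonneg (f (z - 1) - f z), sq_nonneg (f (z + 1) - f z)]
    _ = 0 := finsum_zero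

lemma abs_finsum_mul_centralDifference_le (hc : ∀ z, |c (z + 1) - c z| ≤ L) :
    |∑ᶠ z, c z * (f (z - 1) - f (z + 1)) * f z| ≤ L * ∑ᶠ z, f z ^ 2 := by
  have upper (c : ℤ → ℝ) (hc : ∀ z, |c (z + 1) - c z| ≤ L) :
      ∑ᶠ z, c z * (f (z - 1) - f (z + 1)) * f z ≤ L * ∑ᶠ z, f z ^ 2 := by
    rw [mul_finsum]
    refine finsum_le_finsum_of_le_add_sub
      (T := fun z => L / 2 * f z ^ 2 - c z * f (z - 1) * f z)
      (by fun_prop) (by fun_prop (disch := simp [Injective]))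
      (by fun_prop (disch := simp [Injective])) fun z => ?_
    have commutator : (c (z + 1) - c z) * (f z * f (z + 1)) ≤ L * ((f z ^ 2 + f (z + 1) ^ 2) / 2) :=
      calc (c (z + 1) - c z) * (f z * f (z + 1))
          ≤ |c (z + 1) - c z| * |f z * f (z + 1)| := by
            rw [← abs_mul]; exact le_abs_self _
        _ ≤ L * ((f z ^ 2 + f (z + 1) ^ 2) / 2) := by
            refine mul_le_mul (hc z) ?_ (abs_nonneg _) ((abs_nonneg _).trans (hc z))
            rw [abs_le]
            constructor <;> nlinarith [sq_nonneg (f z + f (z + 1)), sq_nonneg (f z - f (z + 1))]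
    rw [add_sub_cancel_right]
    linarith
  refine abs_le'.mpr ⟨upper c hc, ?_⟩
  rw [← finsum_neg_distrib]
  simpa only [Pi.neg_apply, neg_mul] using
    upper (-c) fun z => by simpa only [Pi.neg_apply, neg_sub_neg, abs_sub_comm] using hc z

lemma neg_finsum_mul_forwardBDF_le (hL : 0 ≤ L) (hc : ∀ z, 0 ≤ c z)
    (hcL : ∀ z, c z - c (z + 1) ≤ L) :
    -∑ᶠ z, c z * (3 * f z - 4 * f (z + 1) + f (z + 2)) * f z ≤ 5 * L * ∑ᶠ z, f z ^ 2 := by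
  set E : ℤ → ℝ := fun z => f z ^ 2 + (2 * f z - f (z + 1)) ^ 2 with hE
  have E_nonneg (z : ℤ) : 0 ≤ E z := by positivity
  have E_le (z : ℤ) : E z ≤ 7 * f z ^ 2 + 3 * f (z + 1) ^ 2 := by
    nlinarith [sq_nonneg (f z + f (z + 1))]
  have energy_identity (z : ℤ) : 2 * ((3 * f z - 4 * f (z + 1) + f (z + 2)) * f z) =
      E z - E (z + 1) + (f z - 2 * f (z + 1) + f (z + 2)) ^ 2 := by
    simp only [hE, add_assoc, one_add_one_eq_two]
    ring
  rw [mul_finsum, ← finsum_neg_distrib]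
  refine finsum_le_finsum_of_le_add_sub
    (T := fun z => c (z - 1) / 2 * E z + 3 / 2 * L * f z ^ 2)
    (by fun_prop) (by fun_prop (disch := simp [Injective]))
    (by fun_prop (disch := simp [Injective])) fun z => ?_
  have dissipation : 0 ≤ c z * (f z - 2 * f (z + 1) + f (z + 2)) ^ 2 :=
    mul_nonneg (hc z) (sq_nonneg _)
  have commutator : (c (z - 1) - c z) * E z ≤ L * (7 * f z ^ 2 + 3 * f (z + 1) ^ 2) :=
    (mul_le_mul_of_nonneg_right (by simpa using hcL (z - 1)) (E_nonneg z)).trans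
      (mul_le_mul_of_nonneg_left (E_le z) hL)
  rw [add_sub_cancel_right]
  linear_combination (1 / 2) * dissipation + (1 / 2) * commutator - c z / 2 * energy_identity z

lemma neg_finsum_mul_backwardBDF_le (hL : 0 ≤ L) (hc : ∀ z, 0 ≤ c z)
    (hcL : ∀ z, c (z + 1) - c z ≤ L) :
    -∑ᶠ z, c z * (3 * f z - 4 * f (z - 1) + f (z - 2)) * f z ≤ 5 * L * ∑ᶠ z, f z ^ 2 := by
  have reflected := neg_finsum_mul_forwardBDF_le (f := fun z => f (-z)) (c := fun z => c (-z))
    (hf.fun_comp_of_injective neg_injective) hL (fun z => hc (-z))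
    (fun z => by simpa using hcL (-(z + 1)))
  simp only [neg_add, ← sub_eq_add_neg] at reflected
  have reflect (g : ℤ → ℝ) : ∑ᶠ z, g (-z) = ∑ᶠ z, g z := finsum_comp_equiv (Equiv.neg ℤ)
  rwa [reflect fun z => c z * (3 * f z - 4 * f (z - 1) + f (z - 2)) * f z,
    reflect fun z => f z ^ 2] at reflected

end FiniteSupport

section ZeroExtension

variable {n : ℕ}

/-- The extension of a grid vector by zero to all integer indices, which turns the homogeneous
Dirichlet convention for out-of-range values into honest function values. -/
noncomputable def zeroExt (v : Fin n → ℝ) : ℤ → ℝ :=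
  Function.extend (fun i : Fin n => (i.val : ℤ)) v fun _ => 0

lemma intCast_val_injective : Function.Injective fun i : Fin n => (i.val : ℤ) :=
  Nat.cast_injective.comp Fin.val_injective

lemma zeroExt_val (v : Fin n → ℝ) (i : Fin n) : zeroExt v i.val = v i :=
  intCast_val_injective.extend_apply v _ i

lemma zeroExt_eq_zero (v : Fin n → ℝ) {z : ℤ} (hz : ∀ i : Fin n, (i.val : ℤ) ≠ z) :
    zeroExt v z = 0 :=
  Function.extend_apply' v _ z (by simpa using hz)

lemma support_zeroExt_subset (v : Fin n → ℝ) :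
    (zeroExt v).support ⊆ Set.range fun i : Fin n => (i.val : ℤ) := fun z hz => by
  by_contra h
  exact hz (zeroExt_eq_zero v fun i hi => h ⟨i, hi⟩)

lemma hasFiniteSupport_zeroExt (v : Fin n → ℝ) : (zeroExt v).HasFiniteSupport :=
  (Set.finite_range _).subset (support_zeroExt_subset v)

lemma sum_ite_mul_eq_mul_zeroExt (v : Fin n → ℝ) (z : ℤ) (w : ℝ) :
    ∑ k : Fin n, (if (k.val : ℤ) = z then w else 0) * v k = w * zeroExt v z := by
  by_cases hz : ∃ i : Fin n, (i.val : ℤ) = z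
  · obtain ⟨i, rfl⟩ := hz
    simp [zeroExt_val, ← Fin.ext_iff]
  · push Not at hz
    simp [zeroExt_eq_zero v hz, hz]

lemma sum_mul_eq_finsum_mul_zeroExt (g : ℤ → ℝ) (v : Fin n → ℝ) :
    ∑ i : Fin n, g i.val * v i = ∑ᶠ z, g z * zeroExt v z := by
  have hsupp : (Function.support fun z => g z * zeroExt v z) ⊆
      Set.range fun i : Fin n => (i.val : ℤ) :=
    (Function.support_mul_subset_right g _).trans (support_zeroExt_subset v)
  rw [← Set.indicator_eq_self.mpr hsupp, ← finsum_mem_def,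
    finsum_mem_range intCast_val_injective, finsum_eq_sum_of_fintype]
  simp only [zeroExt_val]

lemma dotProduct_self_eq_finsum (v : Fin n → ℝ) : v ⬝ᵥ v = ∑ᶠ z, zeroExt v z ^ 2 := by
  simpa only [zeroExt_val, sq, dotProduct] using sum_mul_eq_finsum_mul_zeroExt (zeroExt v) v

end ZeroExtension

section Discretisation

variable {m : ℕ} {Δ : ℝ}

lemma D2mat_mulVec (v : Fin (m + 1) → ℝ) (i : Fin (m + 1)) :
    (D2mat m Δ *ᵥ v) i =
      (zeroExt v (i.val - 1) - 2 * zeroExt v i.val + zeroExt v (i.val + 1)) / Δ ^ 2 := by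
  simp only [D2mat, mulVec, dotProduct, of_apply, Fin.ext_iff, ← Nat.cast_inj (R := ℤ),
    div_mul_eq_mul_div, add_mul, ← Finset.sum_div, Finset.sum_add_distrib,
    sum_ite_mul_eq_mul_zeroExt]
  ring

lemma logNormLE_D2mat : LogNormLE (D2mat m Δ) 0 := fun v => by
  have quadratic_form : D2mat m Δ *ᵥ v ⬝ᵥ v =
      (∑ᶠ z, (zeroExt v (z - 1) - 2 * zeroExt v z + zeroExt v (z + 1)) * zeroExt v z) / Δ ^ 2 := by
    rw [← sum_mul_eq_finsum_mul_zeroExt, Finset.sum_div]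
    exact Finset.sum_congr rfl fun i _ => by rw [D2mat_mulVec]; ring
  rw [quadratic_form, zero_mul]
  exact div_nonpos_of_nonpos_of_nonneg
    (finsum_secondDifference_mul_self_nonpos (hasFiniteSupport_zeroExt v)) (sq_nonneg Δ)

variable {c : ℕ → ℝ} {wm1 w0 w1 w2 : ℝ}

lemma diagonal_mul_Atilde_mulVec (v : Fin (m + 1) → ℝ) (i : Fin (m + 1)) :
    ((diagonal (fun i : Fin (m + 1) => c i.val) * Atilde m Δ c wm1 w0 w1 w2) *ᵥ v) i =
      (max (c i.val) 0 * (w2 * zeroExt v (i.val + 2) + w1 * zeroExt v (i.val + 1)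
          + w0 * zeroExt v i.val + wm1 * zeroExt v (i.val - 1))
        + max (-c i.val) 0 * (wm1 * zeroExt v (i.val + 1) + w0 * zeroExt v i.val
          + w1 * zeroExt v (i.val - 1) + w2 * zeroExt v (i.val - 2))) / Δ := by
  rw [← mulVec_mulVec, mulVec_diagonal]
  rcases lt_trichotomy (c i.val) 0 with hc | hc | hc
  · rw [max_eq_right hc.le, max_eq_left (neg_nonneg.mpr hc.le)]
    simp only [Atilde, mulVec, dotProduct, of_apply, hc, hc.not_gt, if_true, if_false, Fin.ext_iff,
      ← Nat.cast_inj (R := ℤ), div_mul_eq_mul_div, add_mul, ← Finset.sum_div,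
      Finset.sum_add_distrib, sum_ite_mul_eq_mul_zeroExt]
    ring
  · simp [hc]
  · rw [max_eq_left hc.le, max_eq_right (neg_nonpos.mpr hc.le)]
    simp only [Atilde, mulVec, dotProduct, of_apply, hc, if_true, Fin.ext_iff,
      ← Nat.cast_inj (R := ℤ), div_mul_eq_mul_div, add_mul, ← Finset.sum_div,
      Finset.sum_add_distrib, sum_ite_mul_eq_mul_zeroExt]
    ring

lemma diagonal_mul_Atilde_mulVec_dotProduct (hw1 : wm1 + w0 + w1 + w2 = 0)
    (hw3 : wm1 + w1 + 4 * w2 = 0) (v : Fin (m + 1) → ℝ) :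
    let f := zeroExt v
    let C : ℤ → ℝ := fun z => c z.toNat
    (diagonal (fun i : Fin (m + 1) => c i.val) * Atilde m Δ c wm1 w0 w1 w2) *ᵥ v ⬝ᵥ v =
      (wm1 * ∑ᶠ z, C z * (f (z - 1) - f (z + 1)) * f z
        + w2 * (∑ᶠ z, max (C z) 0 * (3 * f z - 4 * f (z + 1) + f (z + 2)) * f z
          + ∑ᶠ z, max (-C z) 0 * (3 * f z - 4 * f (z - 1) + f (z - 2)) * f z)) / Δ := by
  intro f C
  obtain rfl : w1 = -wm1 - 4 * w2 := by linarith
  obtain rfl : w0 = 3 * w2 := by linarith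
  rw [← sum_mul_eq_finsum_mul_zeroExt, ← sum_mul_eq_finsum_mul_zeroExt,
    ← sum_mul_eq_finsum_mul_zeroExt, ← Finset.sum_add_distrib, Finset.mul_sum, Finset.mul_sum,
    ← Finset.sum_add_distrib, Finset.sum_div]
  refine Finset.sum_congr rfl fun i _ => ?_
  rw [diagonal_mul_Atilde_mulVec]
  simp only [C, f, Int.toNat_natCast]
  linear_combination (wm1 * (zeroExt v (i.val - 1) - zeroExt v (i.val + 1)) * v i / Δ) *
    max_zero_sub_max_neg_zero_eq_self (c i.val)

lemma abs_sub_toNat_le {L : ℝ} (hc : ∀ i, |c (i + 1) - c i| ≤ L) (z : ℤ) :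
    |c (z + 1).toNat - c z.toNat| ≤ L := by
  rcases le_or_gt 0 z with hz | hz
  · rw [Int.toNat_add hz zero_le_one]
    exact hc z.toNat
  · rw [Int.toNat_of_nonpos hz.le, Int.toNat_of_nonpos hz, sub_self, abs_zero]
    exact (abs_nonneg _).trans (hc 0)

lemma logNormLE_diagonal_mul_Atilde (hw1 : wm1 + w0 + w1 + w2 = 0)
    (hw3 : wm1 + w1 + 4 * w2 = 0) (hw4 : w2 ≤ 0) (hΔ : 0 < Δ) {L : ℝ}
    (hc : ∀ i, |c (i + 1) - c i| ≤ L * Δ) :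
    LogNormLE (diagonal (fun i : Fin (m + 1) => c i.val) * Atilde m Δ c wm1 w0 w1 w2)
      ((|wm1| - 10 * w2) * L) := fun v => by
  have hf := hasFiniteSupport_zeroExt v
  have hC := abs_sub_toNat_le hc
  have hLΔ : 0 ≤ L * Δ := (abs_nonneg _).trans (hc 0)
  have central := abs_finsum_mul_centralDifference_le hf (c := fun z => c z.toNat) hC
  have forward := neg_finsum_mul_forwardBDF_le hf hLΔ (fun z => le_max_right (c z.toNat) 0)
    fun z => (le_abs_self _).trans <| (abs_max_sub_max_le_abs _ _ 0).trans <| by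
      rw [abs_sub_comm]; exact hC z
  have backward := neg_finsum_mul_backwardBDF_le hf hLΔ (fun z => le_max_right (-c z.toNat) 0)
    fun z => (le_abs_self _).trans <| (abs_max_sub_max_le_abs _ _ 0).trans <| by
      rw [neg_sub_neg, abs_sub_comm]; exact hC z
  rw [← dotProduct_self_eq_finsum] at central forward backward
  rw [diagonal_mul_Atilde_mulVec_dotProduct hw1 hw3, div_le_iff₀ hΔ]
  set S := ∑ᶠ z : ℤ, c z.toNat * (zeroExt v (z - 1) - zeroExt v (z + 1)) * zeroExt v z
  have central' : wm1 * S ≤ |wm1| * (L * Δ * (v ⬝ᵥ v)) :=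
    (le_abs_self _).trans (abs_mul wm1 S ▸ mul_le_mul_of_nonneg_left central (abs_nonneg wm1))
  have upwind := mul_le_mul_of_nonneg_left (add_le_add forward backward) (neg_nonneg.mpr hw4)
  linarith

end Discretisation

lemma abs_sub_succ_of_affine {c : ℕ → ℝ} {s t α Δ : ℝ} (hα : 0 ≤ α) (hΔ : 0 ≤ Δ)
    (hc : ∀ i, c i = s - α * (t + (i + 1) * Δ)) (i : ℕ) : |c (i + 1) - c i| = α * Δ := by
  have step : c (i + 1) - c i = -(α * Δ) := by rw [hc, hc]; push_cast; ring
  rw [step, abs_neg, abs_of_nonneg (mul_nonneg hα hΔ)]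

theorem semidiscretisation_log_norm_bound_general
    {wm1 w0 w1 w2 : ℝ} (hw1 : wm1 + w0 + w1 + w2 = 0) (hw3 : wm1 + w1 + 4 * w2 = 0) (hw4 : w2 ≤ 0)
    (σ ρ : ℝ) {α β : ℝ} (m₁ m₂ : ℕ) {Δx Δy : ℝ} (hΔx : 0 < Δx) (hΔy : 0 < Δy) {a b : ℕ → ℝ}
    (ha : ∀ i, |a (i + 1) - a i| ≤ α * Δx) (hb : ∀ j, |b (j + 1) - b j| ≤ β * Δy) :
    LogNormLE
      ((((σ ^ 2 / 2) • D2mat m₁ Δx - ρ • (1 : Matrix (Fin (m₁ + 1)) (Fin (m₁ + 1)) ℝ))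
          ⊗ₖ (1 : Matrix (Fin (m₂ + 1)) (Fin (m₂ + 1)) ℝ))
        + (diagonal (fun i : Fin (m₁ + 1) => a i.val) * Atilde m₁ Δx a wm1 w0 w1 w2)
          ⊗ₖ (1 : Matrix (Fin (m₂ + 1)) (Fin (m₂ + 1)) ℝ)
        + (1 : Matrix (Fin (m₁ + 1)) (Fin (m₁ + 1)) ℝ)
          ⊗ₖ (diagonal (fun j : Fin (m₂ + 1) => b j.val) * Atilde m₂ Δy b wm1 w0 w1 w2))
      ((|wm1| - 10 * w2) * (α + β) - ρ) := by
  have diffusion := ((logNormLE_D2mat (m := m₁) (Δ := Δx)).smul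
    (show 0 ≤ σ ^ 2 / 2 by positivity)).sub_smul_one ρ
  have convection_x := logNormLE_diagonal_mul_Atilde (m := m₁) hw1 hw3 hw4 hΔx ha
  have convection_y := logNormLE_diagonal_mul_Atilde (m := m₂) hw1 hw3 hw4 hΔy hb
  convert (diffusion.kronecker_one.add convection_x.kronecker_one).add convection_y.one_kronecker
    using 1
  ring

/-- The logarithmic ℓ2-norm of the full semidiscretisation matrix
A = ((σ²/2)D₂ − (r+λ)I₁)⊗I₂ + (D_xÃ_x)⊗I₂ + I₁⊗(D_yÃ_y) (Dirichlet boundary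
conditions) satisfies μ₂[A] ≤ C̃ = (|w₋₁| − 10w₂)(α + β) − (r + λ). -/
theorem semidiscretisation_log_norm_bound
    (wm1 w0 w1 w2 : ℝ)
    (hw1 : wm1 + w0 + w1 + w2 = 0)
    (hw2 : -wm1 + w1 + 2*w2 = 1)
    (hw3 : wm1 + w1 + 4*w2 = 0)
    (hw4 : w2 ≤ 0)
    (σ μ : ℝ) (α β : ℝ) (hα : 0 < α) (hβ : 0 < β)
    (r lam : ℝ) (hr : 0 ≤ r) (hlam : 0 ≤ lam)
    (m₁ m₂ : ℕ) (hm₁ : 4 ≤ m₁) (hm₂ : 4 ≤ m₂)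
    (Δx Δy : ℝ) (hΔx : 0 < Δx) (hΔy : 0 < Δy) (xmin ymin : ℝ)
    (i₀ j₀ : ℕ) (hi₀l : 2 ≤ i₀) (hi₀u : i₀ ≤ m₁ - 2)
    (hj₀l : 2 ≤ j₀) (hj₀u : j₀ ≤ m₂ - 2)
    (hx : xmin + (i₀ + 1) * Δx = μ)
    (hy : ymin + (j₀ + 1) * Δy = 0) :
    let x : ℕ → ℝ := fun i => xmin + (i + 1) * Δx
    let y : ℕ → ℝ := fun j => ymin + (j + 1) * Δy
    let a : ℕ → ℝ := fun i => α * (μ - x i)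
    let b : ℕ → ℝ := fun j => -β * y j
    let A : Matrix (Fin (m₁+1) × Fin (m₂+1)) (Fin (m₁+1) × Fin (m₂+1)) ℝ :=
      Matrix.kroneckerMap (· * ·)
        ((σ^2/2) • D2mat m₁ Δx - (r + lam) • (1 : Matrix (Fin (m₁+1)) (Fin (m₁+1)) ℝ))
        (1 : Matrix (Fin (m₂+1)) (Fin (m₂+1)) ℝ)
      + Matrix.kroneckerMap (· * ·)
          (Matrix.diagonal (fun i : Fin (m₁+1) => a i.val) * Atilde m₁ Δx a wm1 w0 w1 w2)
          (1 : Matrix (Fin (m₂+1)) (Fin (m₂+1)) ℝ)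
      + Matrix.kroneckerMap (· * ·)
          (1 : Matrix (Fin (m₁+1)) (Fin (m₁+1)) ℝ)
          (Matrix.diagonal (fun j : Fin (m₂+1) => b j.val) * Atilde m₂ Δy b wm1 w0 w1 w2)
    ∀ V : Fin (m₁+1) × Fin (m₂+1) → ℝ,
      (A.mulVec V) ⬝ᵥ V ≤ ((|wm1| - 10*w2) * (α + β) - (r + lam)) * (V ⬝ᵥ V) := by
  intro x y a b _
  exact semidiscretisation_log_norm_bound_general hw1 hw3 hw4 σ (r + lam) m₁ m₂ hΔx hΔy
    (fun i => (abs_sub_succ_of_affine (s := α * μ) (t := xmin) hα.le hΔx.le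
      (fun _ => by ring) i).le)
    (fun j => (abs_sub_succ_of_affine (s := 0) (t := ymin) hβ.le hΔy.le (fun _ => by ring) j).le)
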